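/- arXiv:1902.05106 — 5 statements merged into one kernel-verified Lean document; each statement's English description precedes it below -/
import Mathlib

section
/- Let p ≥ 1, let Ω and Ψ be real symmetric positive definite p×p matrices, and let b ∈ ℝ^p satisfy b_j = 0 for some index j. Then the integral defining the (unnormalized) structured product normal marginal prior density at b, namely ∫_{ℝ^p} (∏_{i=1}^{p} 1/|s_i|)·exp( −(1/2)·( Σ_{i,k} (Ω^{−1})_{ik}·(b_i/s_i)·(b_k/s_k) + sᵀ Ψ^{−1} s ) ) ds, equals +∞. (This is Proposition: for the SPN prior, if b_j = 0 for any j ∈ {1,…,p}, then p(b | Ψ, Ω) = +∞.) -/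
open MeasureTheory Real

lemma setLIntegral_Ioc_zero_one_inv_eq_top :
    ∫⁻ x in Set.Ioc (0 : ℝ) 1, ENNReal.ofReal x⁻¹ = ⊤ := by
  by_contra h
  have hint : IntegrableOn (fun x : ℝ => x⁻¹) (Set.Ioc 0 1) := by
    refine ⟨measurable_inv.aestronglyMeasurable, ?_⟩
    rw [hasFiniteIntegral_iff_ofReal]
    · exact lt_top_iff_ne_top.2 h
    · filter_upwards [ae_restrict_mem measurableSet_Ioc] with x hx
      exact inv_nonneg.2 hx.1.le
  rw [← intervalIntegrable_iff_integrableOn_Ioc_of_le zero_le_one,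
    intervalIntegrable_inv_iff] at hint
  simp at hint

/-- A function of a single coordinate with infinite integral over one side of a box
has infinite integral over the box. -/
lemma setLIntegral_univ_pi_eval_eq_top {ι : Type*} [Fintype ι] [DecidableEq ι]
    (S : ι → Set ℝ) (j : ι) (hS : ∀ i ≠ j, volume (S i) ≠ 0)
    {f : ℝ → ENNReal} (hf : Measurable f) (hfj : ∫⁻ x in S j, f x = ⊤) :
    ∫⁻ s : ι → ℝ in Set.univ.pi S, f (s j) = ⊤ := by
  rw [volume_pi, Measure.restrict_pi_pi]
  refine (lintegral_map (g := Function.eval j) hf (measurable_pi_apply j)).symm.trans ?_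
  rw [Measure.pi_map_eval, lintegral_smul_measure, hfj, smul_eq_mul, ENNReal.mul_top]
  refine Finset.prod_ne_zero_iff.2 fun i hi => ?_
  simpa using hS i (Finset.ne_of_mem_erase hi)

lemma sum_sum_mul_mul_le {ι : Type*} [Fintype ι] (A : Matrix ι ι ℝ) {x y : ι → ℝ}
    (h : ∀ i, |x i| ≤ y i) :
    ∑ i, ∑ k, A i k * x i * x k ≤ ∑ i, ∑ k, |A i k| * y i * y k := by
  refine Finset.sum_le_sum fun i _ => Finset.sum_le_sum fun k _ => ?_
  refine (le_abs_self _).trans ?_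
  rw [abs_mul, abs_mul]
  have := (abs_nonneg _).trans (h i)
  gcongr <;> exact h _

lemma inv_le_prod_one_div_abs {ι : Type*} [Fintype ι] [DecidableEq ι] {s : ι → ℝ}
    (hs : ∀ i, 0 < s i ∧ s i ≤ 1) (j : ι) : (s j)⁻¹ ≤ ∏ i, 1 / |s i| := by
  have hone : ∀ i, 1 ≤ 1 / |s i| := fun i => by
    rw [abs_of_pos (hs i).1]
    exact (one_le_div (hs i).1).2 (hs i).2
  rw [← Finset.mul_prod_erase _ _ (Finset.mem_univ j), abs_of_pos (hs j).1, one_div]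
  refine le_mul_of_one_le_right (inv_nonneg.2 (hs j).1.le) ?_
  calc (1 : ℝ) = ∏ _i ∈ Finset.univ.erase j, (1 : ℝ) := by simp
    _ ≤ _ := Finset.prod_le_prod (fun _ _ => zero_le_one) fun i _ => hone i

/-- Proposition: for the SPN prior, if `b j = 0` for some `j`, then the (unnormalized)
marginal prior density integral at `b` equals `+∞`. -/
theorem spn_density_pole (p : ℕ) (hp : 1 ≤ p) (Ω Ψ : Matrix (Fin p) (Fin p) ℝ)
    (hΩsymm : Ω.IsSymm) (hΩ : Ω.PosDef) (hΨsymm : Ψ.IsSymm) (hΨ : Ψ.PosDef)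
    (b : Fin p → ℝ) (j : Fin p) (hbj : b j = 0) :
    ∫⁻ s : Fin p → ℝ, ENNReal.ofReal ((∏ i, 1 / |s i|) *
      Real.exp (-(1 / 2) * ((∑ i, ∑ k, Ω⁻¹ i k * (b i / s i) * (b k / s k)) +
        ∑ i, ∑ k, s i * Ψ⁻¹ i k * s k))) = ⊤ := by
  set S : Fin p → Set ℝ := fun i => if i = j then Set.Ioc 0 1 else Set.Ioc (1 / 2) 1 with hS
  set C : ℝ := (∑ i, ∑ k, |Ω⁻¹ i k| * (2 * |b i|) * (2 * |b k|)) +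
    ∑ i, ∑ k, |Ψ⁻¹ i k| * 1 * 1
  have hbox : ∫⁻ s : Fin p → ℝ in Set.univ.pi S,
      ENNReal.ofReal (Real.exp (-(1 / 2) * C)) * ENNReal.ofReal (s j)⁻¹ = ⊤ := by
    rw [lintegral_const_mul _ (by fun_prop),
      setLIntegral_univ_pi_eval_eq_top S j (f := fun x => ENNReal.ofReal x⁻¹),
      ENNReal.mul_top]
    · simpa using Real.exp_pos _
    · intro i hi
      simp only [hS, if_neg hi, Real.volume_Ioc]
      norm_num
    · fun_prop
    · simpa [hS] using setLIntegral_Ioc_zero_one_inv_eq_top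
  refine top_le_iff.1 (hbox.symm.le.trans
    (le_trans ?_ (setLIntegral_le_lintegral (Set.univ.pi S) _)))
  refine setLIntegral_mono' (MeasurableSet.univ_pi fun i => ?_) fun s hs => ?_
  · simp only [hS]
    split_ifs <;> exact measurableSet_Ioc
  have hmem : ∀ i, 0 < s i ∧ s i ≤ 1 := fun i => by
    have := hs i (Set.mem_univ i)
    simp only [hS] at this
    split_ifs at this
    · exact this
    · exact ⟨by linarith [this.1], this.2⟩
  have hdiv : ∀ i, |b i / s i| ≤ 2 * |b i| := fun i => by
    by_cases hij : i = j
    · simp [hij, hbj]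
    · have := hs i (Set.mem_univ i)
      simp only [hS, if_neg hij] at this
      rw [abs_div, abs_of_pos (hmem i).1, div_le_iff₀ (hmem i).1]
      nlinarith [abs_nonneg (b i), this.1]
  have hone : ∀ i, |s i| ≤ 1 := fun i => by
    rw [abs_of_pos (hmem i).1]
    exact (hmem i).2
  have hquad : (∑ i, ∑ k, Ω⁻¹ i k * (b i / s i) * (b k / s k)) +
      ∑ i, ∑ k, s i * Ψ⁻¹ i k * s k ≤ C := by
    simp_rw [mul_comm (s _) (Ψ⁻¹ _ _)]
    exact add_le_add (sum_sum_mul_mul_le Ω⁻¹ hdiv)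
      (sum_sum_mul_mul_le Ψ⁻¹ (y := fun _ => 1) hone)
  rw [← ENNReal.ofReal_mul (Real.exp_pos _).le, mul_comm]
  refine ENNReal.ofReal_le_ofReal (mul_le_mul (inv_le_prod_one_div_abs hmem j)
    (Real.exp_le_exp.2 (by linarith)) (Real.exp_pos _).le ?_)
  exact Finset.prod_nonneg fun i _ => by positivity
end

section
/- Let p ≥ 1, let Ω be a real symmetric positive definite p×p matrix, let 0 < c < 1/2, and let b ∈ ℝ^p satisfy b_j = 0 for some index j. Then the integral defining the (unnormalized) structured normal-gamma marginal prior density at b, namely ∫_{(0,∞)^p} (∏_{i=1}^{p} s_i^{2c − 2})·exp( −(1/2)·Σ_{i,k} (Ω^{−1})_{ik}·(b_i/s_i)·(b_k/s_k) − c·Σ_{i=1}^{p} s_i² ) ds, equals +∞. (This is Proposition: for the SNG prior, if c < 1/2 and b_j = 0 for any j ∈ {1,…,p}, then p(b | c, Ω) = +∞.) -/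
open MeasureTheory Real

/-- The quadratic form in the exponent is bounded uniformly in all `s` with
`|b i / s i| ≤ |b i|` for every `i`. -/
lemma sum_mul_div_le_sum_abs {ι : Type*} [Fintype ι] (A : Matrix ι ι ℝ) (b s : ι → ℝ)
    (h : ∀ i, |b i / s i| ≤ |b i|) :
    ∑ i, ∑ k, A i k * (b i / s i) * (b k / s k) ≤ ∑ i, ∑ k, |A i k| * |b i| * |b k| := by
  refine Finset.sum_le_sum fun i _ => Finset.sum_le_sum fun k _ => (le_abs_self _).trans ?_
  rw [abs_mul, abs_mul]
  exact mul_le_mul (mul_le_mul_of_nonneg_left (h i) (abs_nonneg _)) (h k) (abs_nonneg _)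
    (by positivity)

/-- A lower bound of order `ε ^ (2 * c - 1)` for the density integral, from the box
`s j ∈ (0, ε)`, `s i ∈ (1, 2)` for `i ≠ j`. -/
lemma exists_pos_le_lintegral_sng {ι : Type*} [Fintype ι] [DecidableEq ι]
    (A : Matrix ι ι ℝ) {c : ℝ} (hc0 : 0 < c) (hc : c < 1 / 2)
    (b : ι → ℝ) (j : ι) (hbj : b j = 0) :
    ∃ K : ℝ, 0 < K ∧ ∀ ε : ℝ, 0 < ε → ε ≤ 1 → ENNReal.ofReal (K * ε ^ (2 * c - 1)) ≤
      ∫⁻ s in {s : ι → ℝ | ∀ i, 0 < s i}, ENNReal.ofReal ((∏ i, s i ^ (2 * c - 2)) *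
        Real.exp (-(1 / 2) * (∑ i, ∑ k, A i k * (b i / s i) * (b k / s k)) -
          c * ∑ i, s i ^ 2)) := by
  set M := ∑ i, ∑ k, |A i k| * |b i| * |b k|
  set P : ℝ := ∏ i ∈ Finset.univ.erase j, (2 : ℝ) ^ (2 * c - 2)
  set E := Real.exp (-(1 / 2) * M - c * ∑ _i : ι, (2 : ℝ) ^ 2)
  have hP : 0 < P := Finset.prod_pos fun i _ => by positivity
  refine ⟨P * E, by positivity, fun ε hε hε1 => ?_⟩
  set l : ι → ℝ := fun i => if i = j then 0 else 1 with hl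
  set u : ι → ℝ := fun i => if i = j then ε else 2 with hu
  set B : Set (ι → ℝ) := Set.univ.pi fun i => Set.Ioo (l i) (u i)
  have hBvol : volume B = ENNReal.ofReal ε := by
    rw [Real.volume_pi_Ioo, ← Finset.mul_prod_erase _ _ (Finset.mem_univ j), Finset.prod_eq_one]
    · simp [hl, hu]
    · intro i hi
      simp only [hl, hu, if_neg (Finset.ne_of_mem_erase hi)]
      norm_num
  have hBpos : ∀ s ∈ B, ∀ i, 0 < s i := fun s hs i => by
    refine lt_of_le_of_lt ?_ (hs i trivial).1
    simp only [hl]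
    split_ifs <;> norm_num
  have hu2 : ∀ i, u i ≤ 2 := fun i => by
    simp only [hu]
    split_ifs <;> linarith
  have hprod : ∏ i, u i ^ (2 * c - 2) = ε ^ (2 * c - 2) * P := by
    rw [← Finset.mul_prod_erase _ _ (Finset.mem_univ j)]
    congr 1
    · simp [hu]
    · exact Finset.prod_congr rfl fun i hi => by simp only [hu, if_neg (Finset.ne_of_mem_erase hi)]
  have hbound : ∀ s ∈ B, ε ^ (2 * c - 2) * P * E ≤ (∏ i, s i ^ (2 * c - 2)) *
      Real.exp (-(1 / 2) * (∑ i, ∑ k, A i k * (b i / s i) * (b k / s k)) -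
        c * ∑ i, s i ^ 2) := by
    intro s hs
    have hpos := hBpos s hs
    have hsu : ∀ i, s i ≤ u i := fun i => (hs i trivial).2.le
    have hdiv : ∀ i, |b i / s i| ≤ |b i| := fun i => by
      by_cases hi : i = j
      · simp [hi, hbj]
      · have h1 : 1 < s i := by simpa [hl, hi] using (hs i trivial).1
        rw [abs_div, abs_of_pos (hpos i)]
        exact div_le_self (abs_nonneg _) h1.le
    have hquad : _ ≤ M := sum_mul_div_le_sum_abs A b s hdiv
    have hsq : ∑ i, s i ^ 2 ≤ ∑ _i : ι, (2 : ℝ) ^ 2 := Finset.sum_le_sum fun i _ =>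
      pow_le_pow_left₀ (hpos i).le ((hsu i).trans (hu2 i)) 2
    have hcsq := mul_le_mul_of_nonneg_left hsq hc0.le
    rw [← hprod]
    refine mul_le_mul ?_ (Real.exp_le_exp.2 <|
      sub_le_sub (mul_le_mul_of_nonpos_left hquad (by norm_num)) hcsq) (Real.exp_pos _).le
      (Finset.prod_nonneg fun i _ => Real.rpow_nonneg (hpos i).le _)
    exact Finset.prod_le_prod (fun i _ => Real.rpow_nonneg ((hpos i).le.trans (hsu i)) _)
      fun i _ => Real.rpow_le_rpow_of_nonpos (hpos i) (hsu i) (by linarith)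
  calc ENNReal.ofReal (P * E * ε ^ (2 * c - 1))
      = ENNReal.ofReal (ε ^ (2 * c - 2) * P * E) * volume B := by
        rw [hBvol, ← ENNReal.ofReal_mul (by positivity),
          show 2 * c - 1 = (2 * c - 2) + 1 by ring, Real.rpow_add_one hε.ne']
        ring_nf
    _ = ∫⁻ _ in B, ENNReal.ofReal (ε ^ (2 * c - 2) * P * E) := (setLIntegral_const _ _).symm
    _ ≤ _ := setLIntegral_mono' (MeasurableSet.univ_pi fun _ => measurableSet_Ioo)
        fun s hs => ENNReal.ofReal_le_ofReal (hbound s hs)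
    _ ≤ _ := lintegral_mono_set hBpos

/-- Proposition: for the SNG prior with `0 < c < 1/2`, if `b j = 0` for some `j`, then the
(unnormalized) marginal prior density integral at `b` equals `+∞`. -/
theorem sng_density_pole (p : ℕ) (hp : 1 ≤ p) (Ω : Matrix (Fin p) (Fin p) ℝ)
    (hΩsymm : Ω.IsSymm) (hΩ : Ω.PosDef) (c : ℝ) (hc0 : 0 < c) (hc : c < 1 / 2)
    (b : Fin p → ℝ) (j : Fin p) (hbj : b j = 0) :
    ∫⁻ s in {s : Fin p → ℝ | ∀ i, 0 < s i}, ENNReal.ofReal ((∏ i, s i ^ (2 * c - 2)) *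
      Real.exp (-(1 / 2) * (∑ i, ∑ k, Ω⁻¹ i k * (b i / s i) * (b k / s k)) -
        c * ∑ i, s i ^ 2)) = ⊤ := by
  obtain ⟨K, hK, hle⟩ := exists_pos_le_lintegral_sng Ω⁻¹ hc0 hc b j hbj
  refine ENNReal.eq_top_of_forall_nnreal_le fun r => ?_
  have htend := (tendsto_rpow_atTop (show 0 < 1 - 2 * c by linarith)).const_mul_atTop hK
  obtain ⟨t, hrt, ht⟩ :=
    ((htend.eventually_ge_atTop (r : ℝ)).and (Filter.eventually_ge_atTop 1)).exists
  have ht0 : 0 < t := by linarith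
  refine le_trans ?_ (hle t⁻¹ (inv_pos.2 ht0) (inv_le_one_of_one_le₀ ht))
  rw [Real.inv_rpow ht0.le, ← Real.rpow_neg ht0.le, neg_sub, ← ENNReal.ofReal_coe_nnreal]
  exact ENNReal.ofReal_le_ofReal hrt
end

section
/- Let p ≥ 2 and let Ω and Ψ be real symmetric positive definite p×p matrices. Then the integral defining the (unnormalized) marginal prior density of the first coordinate at zero under the structured product normal prior, namely ∫_{ℝ^{p−1}} ∫_{ℝ^p} (∏_{i=1}^{p} 1/|s_i|)·exp( −(1/2)·( Σ_{i,k} (Ω^{−1})_{ik}·(b_i/s_i)·(b_k/s_k) + sᵀ Ψ^{−1} s ) ) ds db_2 … db_p, evaluated at b_1 = 0 (with b = (0, b_2, …, b_p)), equals +∞. (This is Proposition: for the SPN prior, p(β_1 = 0 | Ψ, Ω) = +∞.) -/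
open MeasureTheory Real

theorem lintegral_inv_abs_Ioo_zero_one :
    ∫⁻ x in Set.Ioo (0 : ℝ) 1, ENNReal.ofReal (1 / |x|) = ⊤ := by
  by_contra h
  have hint : IntegrableOn (fun x : ℝ => 1 / |x|) (Set.Ioo 0 1) := by
    refine ⟨(by measurability : Measurable fun x : ℝ => 1 / |x|).aestronglyMeasurable, ?_⟩
    rw [hasFiniteIntegral_iff_ofReal (Filter.Eventually.of_forall fun x => by positivity)]
    exact lt_top_iff_ne_top.mpr h
  have hinv : IntegrableOn (fun x : ℝ => x⁻¹) (Set.Ioo 0 1) :=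
    hint.congr_fun (fun x hx => by simp [abs_of_pos hx.1]) measurableSet_Ioo
  have := (intervalIntegrable_iff_integrableOn_Ioo_of_le zero_le_one).mpr hinv
  simp [intervalIntegrable_inv_iff] at this

theorem lintegral_inv_abs_Icc_one_two_ne_zero :
    ∫⁻ x in Set.Icc (1 : ℝ) 2, ENNReal.ofReal (1 / |x|) ≠ 0 := by
  have hle : ∫⁻ _ in Set.Icc (1 : ℝ) 2, ENNReal.ofReal (1 / 2) ≤
      ∫⁻ x in Set.Icc (1 : ℝ) 2, ENNReal.ofReal (1 / |x|) := by
    refine setLIntegral_mono' measurableSet_Icc fun x hx => ENNReal.ofReal_le_ofReal ?_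
    have hx0 : 0 < x := by linarith [hx.1]
    rw [abs_of_pos hx0]
    exact one_div_le_one_div_of_le hx0 hx.2
  refine (lt_of_lt_of_le ?_ hle).ne'
  rw [setLIntegral_const, Real.volume_Icc]
  norm_num

/-- **Tonelli's theorem** for a product of functions of one real variable each. -/
theorem lintegral_fin_nat_prod_eq_prod {n : ℕ} {f : Fin n → ℝ → ENNReal}
    (hf : ∀ i, Measurable (f i)) :
    ∫⁻ x : Fin n → ℝ, ∏ i, f i (x i) = ∏ i, ∫⁻ x, f i x := by
  induction n with
  | zero => simp [volume_pi]
  | succ n ih =>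
    have hmeas : Measurable fun x : Fin (n + 1) → ℝ => ∏ i, f i (x i) :=
      Finset.measurable_prod _ fun i _ => (hf i).comp (measurable_pi_apply i)
    have hprod : Measurable fun x : Fin n → ℝ => ∏ i, f i.succ (x i) :=
      Finset.measurable_prod _ fun i _ => (hf i.succ).comp (measurable_pi_apply i)
    rw [← ((volume_preserving_piFinSuccAbove (fun _ : Fin (n + 1) => ℝ) 0).symm _).lintegral_comp
      hmeas]
    simp only [MeasurableEquiv.piFinSuccAbove_symm_apply, Fin.insertNthEquiv,
      Fin.prod_univ_succ, Fin.insertNth_zero, Equiv.coe_fn_mk, Fin.cons_succ, Fin.cons_zero,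
      cast_eq]
    rw [Measure.volume_eq_prod,
      lintegral_prod_mul (hf 0).aemeasurable hprod.aemeasurable, ih fun i => hf i.succ]

/-- The Lebesgue integral of `∏ i, 1 / |s i|` over the box `(0, 1) × [1, 2]ⁿ` diverges. -/
theorem lintegral_prod_inv_abs_box (n : ℕ) :
    ∫⁻ s : Fin (n + 1) → ℝ, ∏ i, ((Fin.cons (Set.Ioo 0 1) (fun _ => Set.Icc 1 2) :
      Fin (n + 1) → Set ℝ) i).indicator (fun x => ENNReal.ofReal (1 / |x|)) (s i) = ⊤ := by
  have hmeas : ∀ i, MeasurableSet ((Fin.cons (Set.Ioo 0 1) (fun _ => Set.Icc 1 2) :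
      Fin (n + 1) → Set ℝ) i) :=
    Fin.cases measurableSet_Ioo fun _ => measurableSet_Icc
  rw [lintegral_fin_nat_prod_eq_prod fun i =>
    (by measurability : Measurable fun x : ℝ => ENNReal.ofReal (1 / |x|)).indicator (hmeas i)]
  simp only [lintegral_indicator (hmeas _)]
  rw [Fin.prod_univ_succ]
  simp only [Fin.cons_zero, Fin.cons_succ]
  rw [lintegral_inv_abs_Ioo_zero_one, ENNReal.top_mul]
  exact Finset.prod_ne_zero_iff.mpr fun _ _ => lintegral_inv_abs_Icc_one_two_ne_zero

theorem sum_mul_le_sum_abs_mul {ι : Type*} [Fintype ι] (A : Matrix ι ι ℝ) {x y : ι → ℝ}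
    (hxy : ∀ i, |x i| ≤ y i) :
    ∑ i, ∑ k, A i k * x i * x k ≤ ∑ i, ∑ k, |A i k| * y i * y k := by
  refine Finset.sum_le_sum fun i _ => Finset.sum_le_sum fun k _ => (le_abs_self _).trans ?_
  rw [abs_mul, abs_mul]
  have := (abs_nonneg _).trans (hxy i)
  gcongr <;> exact hxy _

theorem spn_joint_density_eq_top (n : ℕ) (A B : Matrix (Fin (n + 1)) (Fin (n + 1)) ℝ)
    (b' : Fin n → ℝ) :
    ∫⁻ s : Fin (n + 1) → ℝ, ENNReal.ofReal ((∏ i, 1 / |s i|) *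
      Real.exp (-(1 / 2) *
        ((∑ i, ∑ k, A i k * ((Fin.cons 0 b' : Fin (n + 1) → ℝ) i / s i) *
            ((Fin.cons 0 b' : Fin (n + 1) → ℝ) k / s k)) +
          ∑ i, ∑ k, s i * B i k * s k))) = ⊤ := by
  set b : Fin (n + 1) → ℝ := Fin.cons 0 b' with hb
  set S : Fin (n + 1) → Set ℝ := Fin.cons (Set.Ioo 0 1) (fun _ => Set.Icc 1 2) with hS
  set C : ℝ := (∑ i, ∑ k, |A i k| * |b i| * |b k|) + ∑ i, ∑ k, |B i k| * 2 * 2 with hC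
  have hbound : ∀ s : Fin (n + 1) → ℝ,
      ENNReal.ofReal (Real.exp (-(1 / 2) * C)) *
        ∏ i, (S i).indicator (fun x => ENNReal.ofReal (1 / |x|)) (s i) ≤
      ENNReal.ofReal ((∏ i, 1 / |s i|) * Real.exp (-(1 / 2) *
        ((∑ i, ∑ k, A i k * (b i / s i) * (b k / s k)) + ∑ i, ∑ k, s i * B i k * s k))) := by
    intro s
    by_cases hs : ∀ i, s i ∈ S i
    · have hquot : ∀ i, |b i / s i| ≤ |b i| := by
        refine Fin.cases (by simp [hb]) fun i => ?_
        have h1 : (1 : ℝ) ≤ s i.succ := (hs i.succ).1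
        rw [abs_div]
        exact div_le_self (abs_nonneg _) (h1.trans (le_abs_self _))
      have hle : ∀ i, |s i| ≤ 2 := by
        refine Fin.cases ?_ fun i => ?_
        · have h0 : s 0 ∈ Set.Ioo (0 : ℝ) 1 := hs 0
          rw [abs_of_pos h0.1]; linarith [h0.2]
        · have h1 : s i.succ ∈ Set.Icc (1 : ℝ) 2 := hs i.succ
          rw [abs_of_pos (by linarith [h1.1])]; exact h1.2
      have hA := sum_mul_le_sum_abs_mul A hquot
      have hB := sum_mul_le_sum_abs_mul B hle
      simp only [mul_comm (s _) (B _ _)]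
      rw [mul_comm, ENNReal.ofReal_mul (by positivity),
        ENNReal.ofReal_prod_of_nonneg fun i _ => by positivity]
      simp only [Set.indicator_of_mem (hs _)]
      gcongr _ * ENNReal.ofReal (Real.exp ?_)
      linarith
    · push Not at hs
      obtain ⟨i, hi⟩ := hs
      rw [Finset.prod_eq_zero (Finset.mem_univ i) (Set.indicator_of_notMem hi _), mul_zero]
      exact zero_le
  refine top_le_iff.mp (le_trans (le_of_eq ?_) (lintegral_mono hbound))
  rw [lintegral_const_mul' _ _ ENNReal.ofReal_ne_top, lintegral_prod_inv_abs_box,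
    ENNReal.mul_top (by simp [Real.exp_pos])]

/-- Proposition: for the SPN prior (dimension `p = n + 1 ≥ 2`), the (unnormalized) marginal
prior density of the first coordinate at `0`, obtained by integrating the joint density over
the remaining coordinates `b₂, …, b_p`, equals `+∞`. -/
theorem spn_first_coord_pole (n : ℕ) (hn : 1 ≤ n)
    (Ω Ψ : Matrix (Fin (n + 1)) (Fin (n + 1)) ℝ)
    (hΩsymm : Ω.IsSymm) (hΩ : Ω.PosDef) (hΨsymm : Ψ.IsSymm) (hΨ : Ψ.PosDef) :
    ∫⁻ b' : Fin n → ℝ, ∫⁻ s : Fin (n + 1) → ℝ, ENNReal.ofReal ((∏ i, 1 / |s i|) *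
      Real.exp (-(1 / 2) *
        ((∑ i, ∑ k, Ω⁻¹ i k * ((Fin.cons 0 b' : Fin (n + 1) → ℝ) i / s i) *
            ((Fin.cons 0 b' : Fin (n + 1) → ℝ) k / s k)) +
          ∑ i, ∑ k, s i * Ψ⁻¹ i k * s k))) = ⊤ := by
  simp only [spn_joint_density_eq_top]
  rw [lintegral_const, ENNReal.top_mul]
  exact NeZero.ne _
end

section
/- Let p ≥ 2, let Ω be a real symmetric positive definite p×p matrix, and let 0 < c < 1/2. Then the integral defining the (unnormalized) marginal prior density of the first coordinate at zero under the structured normal-gamma prior, namely ∫_{ℝ^{p−1}} ∫_{(0,∞)^p} (∏_{i=1}^{p} s_i^{2c − 2})·exp( −(1/2)·Σ_{i,k} (Ω^{−1})_{ik}·(b_i/s_i)·(b_k/s_k) − c·Σ_{i=1}^{p} s_i² ) ds db_2 … db_p, evaluated at b_1 = 0 (with b = (0, b_2, …, b_p)), equals +∞. (This is Proposition: for the SNG prior with c < 1/2, p(β_1 = 0 | c, Ω) = +∞.) -/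
open MeasureTheory Real

theorem lintegral_rpow_Ioi_eq_top {a : ℝ} (ha : a ≤ -1) {K c : ℝ} (hK : 0 < K) (hc : 0 ≤ c) :
    ∫⁻ x in Set.Ioi (0 : ℝ), ENNReal.ofReal (x ^ a * K * Real.exp (-(c * x ^ 2))) = ⊤ := by
  have hpow : ∫⁻ x in Set.Ioo (0 : ℝ) 1, ENNReal.ofReal (x ^ a) = ⊤ := by
    by_contra h
    have hint : IntegrableOn (fun x : ℝ => x ^ a) (Set.Ioo 0 1) := by
      refine ⟨(measurable_id.pow_const a).aestronglyMeasurable, ?_⟩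
      rw [hasFiniteIntegral_iff_ofReal]
      · exact lt_top_iff_ne_top.mpr h
      · exact ae_restrict_of_forall_mem measurableSet_Ioo fun x hx => rpow_nonneg hx.1.le a
    rw [intervalIntegral.integrableOn_Ioo_rpow_iff one_pos] at hint
    linarith
  have hconst : ∫⁻ x in Set.Ioo (0 : ℝ) 1,
      ENNReal.ofReal (K * Real.exp (-c)) * ENNReal.ofReal (x ^ a) = ⊤ := by
    rw [lintegral_const_mul _ (by fun_prop), hpow, ENNReal.mul_top]
    simpa using mul_pos hK (Real.exp_pos _)
  refine top_unique (hconst ▸ ?_)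
  refine (setLIntegral_mono' measurableSet_Ioo fun x hx => ?_).trans
    (lintegral_mono_set Set.Ioo_subset_Ioi_self)
  rw [← ENNReal.ofReal_mul (by positivity), mul_comm, ← mul_assoc]
  have hx0 : 0 < x := hx.1
  have hx2 : x ^ 2 ≤ 1 := pow_le_one₀ hx.1.le hx.2.le
  gcongr
  nlinarith

theorem setLIntegral_pos_orthant_eq_top {n : ℕ} {F : (Fin (n + 1) → ℝ) → ENNReal}
    (hF : Measurable F)
    (h : ∀ t : Fin n → ℝ, (∀ i, 0 < t i) → ∫⁻ x in Set.Ioi (0 : ℝ), F (Fin.cons x t) = ⊤) :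
    ∫⁻ s in {s : Fin (n + 1) → ℝ | ∀ i, 0 < s i}, F s = ⊤ := by
  have hmeas (m : ℕ) : MeasurableSet {s : Fin m → ℝ | ∀ i, 0 < s i} := by
    simp only [Set.ofPred_forall]
    exact .iInter fun i => measurableSet_lt measurable_const (measurable_pi_apply i)
  have hmp := (volume_preserving_piFinSuccAbove (fun _ : Fin (n + 1) => ℝ) 0).symm
  have hvol : volume {t : Fin n → ℝ | ∀ i, 0 < t i} ≠ 0 := by
    have hopen : IsOpen {t : Fin n → ℝ | ∀ i, 0 < t i} := by
      simp only [Set.ofPred_forall]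
      exact isOpen_iInter_of_finite fun i => isOpen_lt continuous_const (continuous_apply i)
    exact (hopen.measure_pos volume ⟨fun _ => 1, fun _ => one_pos⟩).ne'
  rw [← lintegral_indicator (hmeas _), ← hmp.lintegral_comp (hF.indicator (hmeas _)),
    Measure.volume_eq_prod]
  rw [lintegral_prod_symm (fun z => Set.indicator _ F _)
      ((hF.indicator (hmeas _)).comp hmp.measurable).aemeasurable]
  have htop : ∫⁻ _ in {t : Fin n → ℝ | ∀ i, 0 < t i}, (⊤ : ENNReal) = ⊤ := by
    rw [setLIntegral_const, ENNReal.top_mul hvol]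
  refine top_unique (htop ▸ ?_)
  rw [← lintegral_indicator (hmeas _)]
  refine lintegral_mono fun t => Set.indicator_apply_le' (fun ht => ?_) (fun _ => zero_le)
  rw [← h _ ht, ← lintegral_indicator measurableSet_Ioi]
  refine lintegral_mono fun x => Set.indicator_apply_le' (fun hx => ?_) (fun _ => zero_le)
  rw [Set.indicator_of_mem]
  · simp [MeasurableEquiv.piFinSuccAbove, Fin.insertNthEquiv]
  · intro i
    refine Fin.cases ?_ (fun j => ?_) i
    · simpa [MeasurableEquiv.piFinSuccAbove, Fin.insertNthEquiv] using hx
    · simpa [MeasurableEquiv.piFinSuccAbove, Fin.insertNthEquiv] using ht j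

/-- Proposition: for the SNG prior with `0 < c < 1/2` (dimension `p = n + 1 ≥ 2`), the
(unnormalized) marginal prior density of the first coordinate at `0`, obtained by integrating
the joint density over the remaining coordinates `b₂, …, b_p`, equals `+∞`. -/
theorem sng_first_coord_pole (n : ℕ) (hn : 1 ≤ n)
    (Ω : Matrix (Fin (n + 1)) (Fin (n + 1)) ℝ)
    (hΩsymm : Ω.IsSymm) (hΩ : Ω.PosDef) (c : ℝ) (hc0 : 0 < c) (hc : c < 1 / 2) :
    ∫⁻ b' : Fin n → ℝ, ∫⁻ s in {s : Fin (n + 1) → ℝ | ∀ i, 0 < s i},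
      ENNReal.ofReal ((∏ i, s i ^ (2 * c - 2)) *
        Real.exp (-(1 / 2) *
          (∑ i, ∑ k, Ω⁻¹ i k * ((Fin.cons 0 b' : Fin (n + 1) → ℝ) i / s i) *
            ((Fin.cons 0 b' : Fin (n + 1) → ℝ) k / s k)) -
          c * ∑ i, s i ^ 2)) = ⊤ := by
  have hinner (b' : Fin n → ℝ) : ∫⁻ s in {s : Fin (n + 1) → ℝ | ∀ i, 0 < s i},
      ENNReal.ofReal ((∏ i, s i ^ (2 * c - 2)) *
        Real.exp (-(1 / 2) *
          (∑ i, ∑ k, Ω⁻¹ i k * ((Fin.cons 0 b' : Fin (n + 1) → ℝ) i / s i) *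
            ((Fin.cons 0 b' : Fin (n + 1) → ℝ) k / s k)) -
          c * ∑ i, s i ^ 2)) = ⊤ := by
    refine setLIntegral_pos_orthant_eq_top (by fun_prop) fun t ht => ?_
    have hK : 0 < (∏ i, t i ^ (2 * c - 2)) *
        Real.exp (-(1 / 2) * (∑ i : Fin n, ∑ k : Fin n,
          Ω⁻¹ i.succ k.succ * (b' i / t i) * (b' k / t k)) - c * ∑ i, t i ^ 2) :=
      mul_pos (Finset.prod_pos fun i _ => rpow_pos_of_pos (ht i) _) (Real.exp_pos _)
    rw [← lintegral_rpow_Ioi_eq_top (by linarith : 2 * c - 2 ≤ -1) hK hc0.le]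
    congr 1
    ext x
    simp only [Fin.prod_univ_succ, Fin.sum_univ_succ, Fin.cons_zero, Fin.cons_succ, zero_div,
      mul_zero, zero_mul, Finset.sum_const_zero, zero_add]
    rw [mul_assoc, mul_assoc, mul_assoc, ← Real.exp_add]
    ring_nf
  simp_rw [hinner]
  rw [lintegral_const, ENNReal.top_mul (isOpen_univ.measure_pos volume Set.univ_nonempty).ne']
end

section
/- Let p ≥ 2 and let f, g : ℝ^p → [0, ∞) be Lebesgue-measurable. Define the first-coordinate marginals f₁(x) = ∫_{ℝ^{p−1}} f(x, y) dy and g₁(x) = ∫_{ℝ^{p−1}} g(x, y) dy. Then for every b₁ ∈ ℝ, the iterated integral ∫_{ℝ^{p−1}} ∫_{ℝ^p} g(s) · f(b₁/s₁, b₂/s₂, …, b_p/s_p) · (∏_{j=1}^{p} 1/|s_j|) ds db₂ … db_p equals ∫_{ℝ} g₁(s₁) · f₁(b₁/s₁) · (1/|s₁|) ds₁ (as an identity in [0, +∞]). In particular, if g is the density of the scale vector s and f the density of z, the marginal density of the first coordinate of β = s ∘ z depends only on the univariate marginals of s₁ and z₁, so introducing correlation among the remaining coordinates does not alter the marginal prior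 distribution of β₁. -/
open MeasureTheory Real
open scoped ENNReal

/-- Coordinatewise rescaling by nonzero factors in a Lebesgue integral over `ι → ℝ`. -/
theorem lintegral_div_mul_prod_inv_abs {ι : Type*} [Fintype ι] (t : ι → ℝ) (ht : ∀ j, t j ≠ 0)
    {F : (ι → ℝ) → ℝ≥0∞} (hF : Measurable F) :
    (∫⁻ b : ι → ℝ, F (fun j => b j / t j)) * ENNReal.ofReal (∏ j, 1 / |t j|) = ∫⁻ y, F y := by
  classical
  have hdet : (Matrix.diagonal fun j => 1 / t j).det ≠ 0 := by
    rw [Matrix.det_diagonal]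
    exact Finset.prod_ne_zero_iff.2 fun j _ => one_div_ne_zero (ht j)
  have hmeas : Measurable (Matrix.toLin' (Matrix.diagonal fun j => 1 / t j)) :=
    (LinearMap.continuous_of_finiteDimensional _).measurable
  have habs : |∏ j, 1 / t j| = ∏ j, 1 / |t j| := by
    simp [Finset.abs_prod, abs_inv]
  conv_rhs => rw [← Real.smul_map_diagonal_volume_pi hdet]
  rw [lintegral_smul_measure, lintegral_map hF hmeas, Matrix.det_diagonal, habs, smul_eq_mul,
    mul_comm]
  congr 1
  refine lintegral_congr fun b => congrArg F (funext fun j => ?_)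
  rw [Matrix.toLin'_apply, Matrix.mulVec_diagonal]
  ring

/-- Tonelli's theorem on `Fin (n + 1) → ℝ`, splitting off the first coordinate. -/
theorem lintegral_fin_succ_eq_lintegral_cons {n : ℕ} {F : (Fin (n + 1) → ℝ) → ℝ≥0∞}
    (hF : Measurable F) :
    ∫⁻ s, F s = ∫⁻ x : ℝ, ∫⁻ y : Fin n → ℝ, F (Fin.cons x y) := by
  have h := (volume_preserving_piFinSuccAbove (fun _ : Fin (n + 1) => ℝ) 0).symm
  rw [← h.lintegral_comp hF, Measure.volume_eq_prod, lintegral_prod]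
  · simp [MeasurableEquiv.piFinSuccAbove, Fin.insertNthEquiv]
  · exact (hF.comp h.measurable).aemeasurable

/-- Almost every vector has no vanishing coordinate. -/
theorem ae_forall_apply_ne_zero (ι : Type*) [Fintype ι] : ∀ᵐ s : ι → ℝ, ∀ j, s j ≠ 0 :=
  ae_all_iff.2 fun j =>
    (Measure.quasiMeasurePreserving_eval (fun _ : ι => (volume : Measure ℝ)) j).ae
      (Measure.ae_ne volume 0)

theorem measurable_finCons {n : ℕ} :
    Measurable fun p : ℝ × (Fin n → ℝ) => (Fin.cons p.1 p.2 : Fin (n + 1) → ℝ) := by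
  refine measurable_pi_iff.2 fun j => ?_
  refine Fin.cases ?_ (fun i => ?_) j
  · simpa using measurable_fst
  · simpa using measurable_snd.eval

/-- The marginal density of the first coordinate of `β = s ∘ z` depends only on the
univariate marginals of `s₁` and `z₁`: for nonnegative measurable densities `f` (of `z`) and
`g` (of `s`) on `ℝ^p` with `p = n + 1 ≥ 2`, and first-coordinate marginals `f₁`, `g₁`,
the iterated integral defining the marginal density of `β₁` at `b₁` collapses to a
one-dimensional integral involving only `f₁` and `g₁`. -/
theorem shp_univariate_marginal (n : ℕ) (hn : 1 ≤ n)
    (f g : (Fin (n + 1) → ℝ) → ℝ)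
    (hf : Measurable f) (hg : Measurable g)
    (hf0 : ∀ x, 0 ≤ f x) (hg0 : ∀ x, 0 ≤ g x)
    (f₁ g₁ : ℝ → ℝ≥0∞)
    (hf₁ : ∀ x : ℝ, f₁ x = ∫⁻ y : Fin n → ℝ, ENNReal.ofReal (f (Fin.cons x y)))
    (hg₁ : ∀ x : ℝ, g₁ x = ∫⁻ y : Fin n → ℝ, ENNReal.ofReal (g (Fin.cons x y)))
    (b₁ : ℝ) :
    ∫⁻ b' : Fin n → ℝ, ∫⁻ s : Fin (n + 1) → ℝ, ENNReal.ofReal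
        (g s * f (fun j => (Fin.cons b₁ b' : Fin (n + 1) → ℝ) j / s j) * ∏ j, 1 / |s j|) =
    ∫⁻ s₁ : ℝ, g₁ s₁ * f₁ (b₁ / s₁) * ENNReal.ofReal (1 / |s₁|) := by
  have hcons (x : ℝ) : Measurable fun y : Fin n → ℝ => (Fin.cons x y : Fin (n + 1) → ℝ) :=
    measurable_finCons.comp measurable_prodMk_left
  have hf₁m : Measurable f₁ := by
    rw [funext hf₁]
    exact ((hf.comp measurable_finCons).ennreal_ofReal).lintegral_prod_right'
  have hquot : Measurable fun q : (Fin n → ℝ) × (Fin (n + 1) → ℝ) =>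
      fun j => (Fin.cons b₁ q.1 : Fin (n + 1) → ℝ) j / q.2 j :=
    measurable_pi_iff.2 fun j =>
      ((measurable_pi_apply j).comp ((hcons b₁).comp measurable_fst)).div
        ((measurable_pi_apply j).comp measurable_snd)
  have hprod : Measurable fun q : (Fin n → ℝ) × (Fin (n + 1) → ℝ) => ∏ j, 1 / |q.2 j| := by
    fun_prop
  have hinner (s : Fin (n + 1) → ℝ) (hs : ∀ j, s j ≠ 0) :
      ∫⁻ b' : Fin n → ℝ, ENNReal.ofReal
        (g s * f (fun j => (Fin.cons b₁ b' : Fin (n + 1) → ℝ) j / s j) * ∏ j, 1 / |s j|) =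
      ENNReal.ofReal (g s) * (f₁ (b₁ / s 0) * ENNReal.ofReal (1 / |s 0|)) := by
    have hsplit (b' : Fin n → ℝ) : (fun j => (Fin.cons b₁ b' : Fin (n + 1) → ℝ) j / s j) =
        Fin.cons (b₁ / s 0) (fun j => b' j / s j.succ) := by
      funext j
      refine Fin.cases ?_ (fun i => ?_) j <;> simp
    have hfs : Measurable fun y : Fin n → ℝ => ENNReal.ofReal (f (Fin.cons (b₁ / s 0) y)) :=
      (hf.comp (hcons _)).ennreal_ofReal
    rw [hf₁, ← lintegral_div_mul_prod_inv_abs (fun j : Fin n => s j.succ) (fun j => hs _) hfs,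
      mul_assoc, ← ENNReal.ofReal_mul (by positivity), mul_comm _ (1 / |s 0|),
      ← Fin.prod_univ_succ fun j => 1 / |s j|, ← lintegral_mul_const' _ _ ENNReal.ofReal_ne_top,
      ← lintegral_const_mul' _ _ ENNReal.ofReal_ne_top]
    refine lintegral_congr fun b' => ?_
    rw [hsplit, mul_assoc, ENNReal.ofReal_mul (hg0 _), ENNReal.ofReal_mul (hf0 _)]
  rw [lintegral_lintegral_swap
      (((hg.comp measurable_snd).mul (hf.comp hquot)).mul hprod).ennreal_ofReal.aemeasurable,
    lintegral_congr_ae ((ae_forall_apply_ne_zero _).mono hinner),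
    lintegral_fin_succ_eq_lintegral_cons]
  · refine lintegral_congr fun x => ?_
    simp only [Fin.cons_zero]
    have hgx : Measurable fun y : Fin n → ℝ => ENNReal.ofReal (g (Fin.cons x y)) :=
      (hg.comp (hcons x)).ennreal_ofReal
    rw [lintegral_mul_const _ hgx, hg₁, mul_assoc]
  · fun_prop
end
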